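/- (Chebyshev prediction bound) For every x ∈ ℝ^n and every ε > 0, the proposal-probability that the acceptance ratio deviates from its conditional mean by at least ε is bounded as ∫_{{z ∈ ℝ^n : |η(z, x) − 1/(N₁ w(x))| ≥ ε}} g(z) dz ≤ (1/N₂ − 1/N₁²)/(ε² w(x)²). -/

import Mathlib

open Matrix MeasureTheory ProbabilityTheory Finset

noncomputable section

theorem aux_one (d s m : ℝ) (hd : 0 < d) (hs : 0 ≤ s) :
    Integrable (fun u : ℝ => Real.exp (-(1/2) * (d * (u - m)^2 + s * u^2))) ∧
    ∫ u : ℝ, Real.exp (-(1/2) * (d * (u - m)^2 + s * u^2)) =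
      Real.sqrt (2 * Real.pi / (d + s)) * Real.exp (-(1/2) * (m^2 * d * s / (d + s))) := by
  have hds : 0 < d + s := by linarith
  have h : (fun u : ℝ => Real.exp (-(1/2) * (d * (u - m)^2 + s * u^2))) =
      fun u => Real.exp (-((d+s)/2) * (u - d * m / (d+s))^2) *
        Real.exp (-(1/2) * (m^2 * d * s / (d + s))) := by
    funext u
    rw [← Real.exp_add]
    congr 1
    field_simp
    ring
  rw [h]
  constructor
  · apply Integrable.mul_const
    exact (integrable_exp_neg_mul_sq (b := (d+s)/2) (by positivity)).comp_sub_right (d * m / (d+s))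
  · rw [integral_mul_const,
      integral_sub_right_eq_self (fun u : ℝ => Real.exp (-((d+s)/2) * u^2)), integral_gaussian]
    congr 2
    field_simp

theorem aux_multi (n : ℕ) (B : Matrix (Fin n) (Fin n) ℝ) (hB : B.det ≠ 0)
    (d s m : Fin n → ℝ) (hd : ∀ j, 0 < d j) (hs : ∀ j, 0 ≤ s j) :
    Integrable (fun z : Fin n → ℝ => Real.exp (-(1/2) *
      ∑ j, (d j * ((B *ᵥ z) j - m j)^2 + s j * ((B *ᵥ z) j)^2))) ∧
    ∫ z : Fin n → ℝ, Real.exp (-(1/2) *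
      ∑ j, (d j * ((B *ᵥ z) j - m j)^2 + s j * ((B *ᵥ z) j)^2)) =
      |B.det|⁻¹ * ∏ j, (Real.sqrt (2 * Real.pi / (d j + s j)) *
        Real.exp (-(1/2) * (m j^2 * d j * s j / (d j + s j)))) := by
  set F : (Fin n → ℝ) → ℝ := fun u => ∏ j, Real.exp (-(1/2) * (d j * (u j - m j)^2 + s j * (u j)^2)) with hF
  have h : (fun z : Fin n → ℝ => Real.exp (-(1/2) *
      ∑ j, (d j * ((B *ᵥ z) j - m j)^2 + s j * ((B *ᵥ z) j)^2))) =
      fun z => F (Matrix.toLin' B z) := by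
    funext z
    simp only [hF, Matrix.toLin'_apply]
    rw [Finset.mul_sum, Real.exp_sum]
  have hFi : Integrable F := by
    exact Integrable.fintype_prod
      (f := fun j (u : ℝ) => Real.exp (-(1/2) * (d j * (u - m j)^2 + s j * u^2)))
      (fun j => (aux_one (d j) (s j) (m j) (hd j) (hs j)).1)
  have hFint : ∫ u, F u = ∏ j, (Real.sqrt (2 * Real.pi / (d j + s j)) *
        Real.exp (-(1/2) * (m j^2 * d j * s j / (d j + s j)))) := by
    rw [hF, integral_fintype_prod_volume_eq_prod
      (fun j (u : ℝ) => Real.exp (-(1/2) * (d j * (u - m j)^2 + s j * u^2)))]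
    exact Finset.prod_congr rfl (fun j _ => (aux_one (d j) (s j) (m j) (hd j) (hs j)).2)
  have hmap := Real.map_matrix_volume_pi_eq_smul_volume_pi hB
  have hme : MeasurableEmbedding (Matrix.toLin' B) := by
    have hc : Continuous (Matrix.toLin' B) := LinearMap.continuous_of_finiteDimensional _
    apply hc.measurableEmbedding
    intro x y hxy
    simp only [Matrix.toLin'_apply] at hxy
    exact Matrix.mulVec_injective_of_isUnit ((Matrix.isUnit_iff_isUnit_det B).2 (isUnit_iff_ne_zero.2 hB)) hxy
  rw [h]
  constructor
  · have := (hme.integrable_map_iff (μ := volume) (g := F)).1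
    apply this
    rw [hmap]
    exact hFi.smul_measure (by simp)
  · rw [← hme.integral_map (μ := volume) F, hmap, integral_smul_measure, hFint,
      ENNReal.toReal_ofReal (abs_nonneg _), abs_inv, smul_eq_mul]

theorem aux_cheb {n : ℕ} (g w : (Fin n → ℝ) → ℝ) (hg : ∀ z, 0 ≤ g z) (hw : Measurable w)
    (N1 N2 wx ε : ℝ) (hwx : 0 < wx) (hε : 0 < ε)
    (i0 : Integrable g) (i1 : Integrable (fun z => g z * w z))
    (i2 : Integrable (fun z => g z * w z ^ 2))
    (h0 : ∫ z, g z = 1) (h1 : ∫ z, g z * w z = 1 / N1) (h2 : ∫ z, g z * w z ^ 2 = 1 / N2) :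
    (∫ z in {z : Fin n → ℝ | ε ≤ |w z / wx - 1 / (N1 * wx)|}, g z) ≤
      (1 / N2 - 1 / N1 ^ 2) / (ε ^ 2 * wx ^ 2) := by
  have hS : MeasurableSet {z : Fin n → ℝ | ε ≤ |w z / wx - 1 / (N1 * wx)|} :=
    measurableSet_le measurable_const (((hw.div_const _).sub_const _).abs)
  have e : (fun z => g z * (w z / wx - 1 / (N1 * wx))^2 / ε^2) =
      fun z => ((g z * w z ^ 2 - (2 / N1) * (g z * w z)) + (1/N1^2) * g z) * (1 / (ε^2 * wx^2)) := by
    funext z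
    by_cases hN : N1 = 0
    · subst hN; field_simp; simp; left; ring
    · field_simp; ring
  have ie : Integrable (fun z => g z * (w z / wx - 1 / (N1 * wx))^2 / ε^2) := by
    rw [e]
    exact ((i2.sub (i1.const_mul _)).add (i0.const_mul _)).mul_const _
  have ev : ∫ z, g z * (w z / wx - 1 / (N1 * wx))^2 / ε^2 =
      (1 / N2 - 1 / N1 ^ 2) / (ε ^ 2 * wx ^ 2) := by
    have i3 : Integrable (fun z => g z * w z ^ 2 - (2 / N1) * (g z * w z)) := i2.sub (i1.const_mul _)
    rw [e, integral_mul_const, integral_add i3 (i0.const_mul _),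
      integral_sub i2 (i1.const_mul _), integral_const_mul, integral_const_mul, h0, h1, h2]
    ring
  rw [← ev]
  calc _ ≤ ∫ z in {z : Fin n → ℝ | ε ≤ |w z / wx - 1 / (N1 * wx)|},
        g z * (w z / wx - 1 / (N1 * wx))^2 / ε^2 := by
        apply setIntegral_mono_on i0.integrableOn ie.integrableOn hS
        intro z hz
        rw [le_div_iff₀ (by positivity)]
        apply mul_le_mul_of_nonneg_left _ (hg z)
        rw [← sq_abs (w z / wx - _)]
        exact pow_le_pow_left₀ hε.le hz 2
    _ ≤ _ := setIntegral_le_integral ie (Filter.Eventually.of_forall fun z => by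
        have := hg z
        positivity)

theorem stmt12
    (m n : ℕ) (hm : 0 < m) (hn : 0 < n)
    (A : Matrix (Fin m) (Fin n) ℝ) (L : Matrix (Fin n) (Fin n) ℝ) (hL : IsUnit L.det)
    (μ σ : ℝ) (hμ : 0 < μ) (hσ : 0 < σ)
    (b : Fin m → ℝ)
    (v : Fin n → Fin n → ℝ) (lam : Fin n → ℝ)
    (horth : ∀ i j, v i ⬝ᵥ v j = if i = j then (1 : ℝ) else 0)
    (hlam_nonneg : ∀ j, 0 ≤ lam j) (hlam_anti : Antitone lam)
    (hHdecomp : (L⁻¹)ᵀ * Aᵀ * A * L⁻¹ = ∑ j, lam j • vecMulVec (v j) (v j))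
    (k : ℕ) (hk : k ≤ n)
    (Γcond : Matrix (Fin n) (Fin n) ℝ)
    (hΓcond : Γcond = (μ • (Aᵀ * A) + σ • (Lᵀ * L))⁻¹)
    (Γhat : Matrix (Fin n) (Fin n) ℝ)
    (hΓhat : Γhat = L⁻¹ * (σ • (1 : Matrix (Fin n) (Fin n) ℝ) +
        μ • ∑ j ∈ Finset.univ.filter (fun j : Fin n => (j : ℕ) < k),
          lam j • vecMulVec (v j) (v j))⁻¹ * (L⁻¹)ᵀ)
    (xhat : Fin n → ℝ) (hxhat : xhat = μ • (Γhat *ᵥ (Aᵀ *ᵥ b)))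
    (w : (Fin n → ℝ) → ℝ)
    (hw : ∀ x, w x = Real.exp (-(1/2) * (x ⬝ᵥ ((Γcond⁻¹ - Γhat⁻¹) *ᵥ x))))
    (η : (Fin n → ℝ) → (Fin n → ℝ) → ℝ)
    (hη : ∀ z x, η z x = w z / w x)
    (gfun : (Fin n → ℝ) → ℝ)
    (hgfun : ∀ x, gfun x = (2 * Real.pi) ^ (-(n : ℝ) / 2) * Γhat.det ^ (-(1 : ℝ) / 2) *
        Real.exp (-(1/2) * ((x - xhat) ⬝ᵥ (Γhat⁻¹ *ᵥ (x - xhat)))))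
    (N : ℕ → ℝ)
    (hN : ∀ ℓ : ℕ, N ℓ = Real.exp ((μ ^ 2 / (2 * σ)) *
        ∑ j ∈ Finset.univ.filter (fun j : Fin n => k ≤ (j : ℕ)),
          (((ℓ : ℝ) * μ * lam j) / ((ℓ : ℝ) * μ * lam j + σ)) *
            (b ⬝ᵥ (A *ᵥ (L⁻¹ *ᵥ v j))) ^ 2) *
      ∏ j ∈ Finset.univ.filter (fun j : Fin n => k ≤ (j : ℕ)),
        Real.sqrt (1 + (ℓ : ℝ) * μ * lam j / σ))
    :
    ∀ x : Fin n → ℝ, ∀ ε : ℝ, 0 < ε →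
      (∫ z in {z : Fin n → ℝ | ε ≤ |η z x - 1 / (N 1 * w x)|}, gfun z) ≤
        (1 / N 2 - 1 / N 1 ^ 2) / (ε ^ 2 * w x ^ 2) := by
  intro x ε hε
  set V : Matrix (Fin n) (Fin n) ℝ := Matrix.of v with hVdef
  have hV : V * Vᵀ = 1 := by
    ext i j
    have := horth i j
    simpa [Matrix.mul_apply, dotProduct, Matrix.one_apply, hVdef] using this
  have hVt : Vᵀ * V = 1 := mul_eq_one_comm.1 hV
  have hsum : ∀ c : Fin n → ℝ, ∑ j, c j • vecMulVec (v j) (v j) = Vᵀ * diagonal c * V := by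
    intro c
    ext i j
    rw [Matrix.mul_apply]
    simp only [Matrix.sum_apply, Matrix.smul_apply, vecMulVec_apply, Matrix.mul_diagonal,
      Matrix.transpose_apply, hVdef, Matrix.of_apply, smul_eq_mul]
    exact Finset.sum_congr rfl (fun _ _ => by ring)
  set B : Matrix (Fin n) (Fin n) ℝ := V * L with hBdef
  set C : Matrix (Fin n) (Fin n) ℝ := L⁻¹ * Vᵀ with hCdef
  have hLL : L * L⁻¹ = 1 := Matrix.mul_nonsing_inv L hL
  have hLL' : L⁻¹ * L = 1 := Matrix.nonsing_inv_mul L hL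
  have hBC : B * C = 1 := by
    rw [hBdef, hCdef, Matrix.mul_assoc, ← Matrix.mul_assoc L, hLL, Matrix.one_mul, hV]
  have hCB : C * B = 1 := mul_eq_one_comm.1 hBC
  have hBCt : Cᵀ * Bᵀ = 1 := by rw [← Matrix.transpose_mul, hBC, Matrix.transpose_one]
  have hCBt : Bᵀ * Cᵀ = 1 := by rw [← Matrix.transpose_mul, hCB, Matrix.transpose_one]
  set d : Fin n → ℝ := fun j => σ + μ * (if (j : ℕ) < k then lam j else 0) with hd
  set e : Fin n → ℝ := fun j => if (j : ℕ) < k then 0 else μ * lam j with he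
  have hdpos : ∀ j, 0 < d j := by
    intro j
    have := hlam_nonneg j
    simp only [hd]
    split_ifs <;> positivity
  have hepos : ∀ j, 0 ≤ e j := by
    intro j
    have := hlam_nonneg j
    simp only [he]
    split_ifs <;> positivity
  have hdd : diagonal d * diagonal (fun j => (d j)⁻¹) = (1 : Matrix (Fin n) (Fin n) ℝ) := by
    rw [Matrix.diagonal_mul_diagonal, ← Matrix.diagonal_one]
    congr 1
    funext j
    exact mul_inv_cancel₀ (hdpos j).ne'
  have hM : σ • (1 : Matrix (Fin n) (Fin n) ℝ) +
        μ • ∑ j ∈ Finset.univ.filter (fun j : Fin n => (j : ℕ) < k),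
          lam j • vecMulVec (v j) (v j) = Vᵀ * diagonal d * V := by
    rw [← hsum, Finset.sum_filter]
    have h1 : (1 : Matrix (Fin n) (Fin n) ℝ) = ∑ j, (1:ℝ) • vecMulVec (v j) (v j) := by
      rw [hsum (fun _ => 1), Matrix.diagonal_one, Matrix.mul_one, hVt]
    rw [h1, Finset.smul_sum, Finset.smul_sum, ← Finset.sum_add_distrib]
    refine Finset.sum_congr rfl (fun j _ => ?_)
    simp only [hd]
    split_ifs
    · rw [add_smul, mul_smul, one_smul]
    · simp
  have hMinv : (Vᵀ * diagonal d * V)⁻¹ = Vᵀ * diagonal (fun j => (d j)⁻¹) * V := by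
    apply Matrix.inv_eq_right_inv
    calc _ = Vᵀ * (diagonal d * ((V * Vᵀ) * diagonal (fun j => (d j)⁻¹))) * V := by
          simp only [Matrix.mul_assoc]
      _ = 1 := by rw [hV, Matrix.one_mul, hdd, Matrix.mul_one, hVt]
  have hG : Γhat = C * diagonal (fun j => (d j)⁻¹) * Cᵀ := by
    rw [hΓhat, hM, hMinv, hCdef, Matrix.transpose_mul, Matrix.transpose_transpose]
    simp only [Matrix.mul_assoc]
  have hGinv : Γhat⁻¹ = Bᵀ * diagonal d * B := by
    apply Matrix.inv_eq_left_inv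
    rw [hG]
    calc _ = Bᵀ * (diagonal d * ((B * C) * diagonal (fun j => (d j)⁻¹))) * Cᵀ := by
          simp only [Matrix.mul_assoc]
      _ = 1 := by rw [hBC, Matrix.one_mul, hdd, Matrix.mul_one, hCBt]
  have hLLt : Lᵀ * (L⁻¹)ᵀ = 1 := by rw [← Matrix.transpose_mul, hLL', Matrix.transpose_one]
  have hAA : Aᵀ * A = Bᵀ * diagonal lam * B := by
    calc Aᵀ * A = (Lᵀ * (L⁻¹)ᵀ) * (Aᵀ * A) * (L⁻¹ * L) := by
          rw [hLLt, hLL', Matrix.one_mul, Matrix.mul_one]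
      _ = Lᵀ * ((L⁻¹)ᵀ * Aᵀ * A * L⁻¹) * L := by simp only [Matrix.mul_assoc]
      _ = _ := by
        rw [hHdecomp, hsum, hBdef, Matrix.transpose_mul]
        simp only [Matrix.mul_assoc]
  have hLtL : Lᵀ * L = Bᵀ * B := by
    rw [hBdef, Matrix.transpose_mul]
    calc _ = Lᵀ * 1 * L := by rw [Matrix.mul_one]
      _ = _ := by rw [← hVt]; simp only [Matrix.mul_assoc]
  have hP : μ • (Aᵀ * A) + σ • (Lᵀ * L) = Bᵀ * diagonal (fun j => d j + e j) * B := by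
    have h1 : (diagonal (fun j => d j + e j) : Matrix (Fin n) (Fin n) ℝ)
        = μ • diagonal lam + σ • 1 := by
      rw [← Matrix.diagonal_one, ← Matrix.diagonal_smul, ← Matrix.diagonal_smul,
        Matrix.diagonal_add]
      congr 1
      funext j
      simp only [hd, he, Pi.smul_apply, smul_eq_mul]
      split_ifs <;> ring
    rw [h1, hAA, hLtL, Matrix.mul_add, Matrix.add_mul]
    simp
  have hdetB : B.det ≠ 0 := by
    intro h
    have := congrArg Matrix.det hBC
    rw [Matrix.det_mul, h] at this
    simp at this
  have hPdet : IsUnit (Bᵀ * diagonal (fun j => d j + e j) * B).det := by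
    rw [isUnit_iff_ne_zero, Matrix.det_mul, Matrix.det_mul, Matrix.det_transpose,
      Matrix.det_diagonal]
    refine mul_ne_zero (mul_ne_zero hdetB ?_) hdetB
    exact Finset.prod_ne_zero_iff.2 (fun j _ => (add_pos_of_pos_of_nonneg (hdpos j) (hepos j)).ne')
  have hdiff : Γcond⁻¹ - Γhat⁻¹ = Bᵀ * diagonal e * B := by
    rw [hΓcond, hP, Matrix.nonsing_inv_nonsing_inv _ hPdet, hGinv, ← Matrix.sub_mul,
      ← Matrix.mul_sub, Matrix.diagonal_sub]
    simp
  have hquad : ∀ (c z : Fin n → ℝ), z ⬝ᵥ ((Bᵀ * diagonal c * B) *ᵥ z) =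
      ∑ j, c j * ((B *ᵥ z) j)^2 := by
    intro c z
    rw [← Matrix.mulVec_mulVec, ← Matrix.mulVec_mulVec, Matrix.dotProduct_mulVec,
      Matrix.vecMul_transpose, dotProduct]
    refine Finset.sum_congr rfl (fun j _ => ?_)
    rw [Matrix.mulVec_diagonal]
    ring
  set cc : Fin n → ℝ := fun j => b ⬝ᵥ (A *ᵥ (L⁻¹ *ᵥ v j)) with hcc
  have hmean : ∀ j, (B *ᵥ xhat) j = μ * ((d j)⁻¹ * cc j) := by
    intro j
    have h1 : B * Γhat = diagonal (fun j => (d j)⁻¹) * Cᵀ := by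
      rw [hG, Matrix.mul_assoc C, ← Matrix.mul_assoc B, hBC, Matrix.one_mul]
    rw [hxhat, Matrix.mulVec_smul, Matrix.mulVec_mulVec, h1, ← Matrix.mulVec_mulVec,
      Pi.smul_apply, Matrix.mulVec_diagonal, smul_eq_mul]
    congr 2
    have h2 : (Cᵀ *ᵥ (Aᵀ *ᵥ b)) j = v j ⬝ᵥ ((L⁻¹)ᵀ *ᵥ (Aᵀ *ᵥ b)) := by
      rw [hCdef, Matrix.transpose_mul, Matrix.transpose_transpose, ← Matrix.mulVec_mulVec]
      rfl
    rw [h2, hcc]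
    simp only
    rw [Matrix.dotProduct_mulVec, Matrix.vecMul_transpose, Matrix.dotProduct_mulVec,
      Matrix.vecMul_transpose, dotProduct_comm]
  have hdetG : Γhat.det ^ (-(1 : ℝ) / 2) = |B.det| * ∏ j, Real.sqrt (d j) := by
    have h1 : Γhat.det = ((B.det)^2 * ∏ j, d j)⁻¹ := by
      have h3 : C.det = (B.det)⁻¹ := by
        have := congrArg Matrix.det hBC
        rw [Matrix.det_mul, Matrix.det_one] at this
        exact eq_inv_of_mul_eq_one_right this
      rw [hG, Matrix.det_mul, Matrix.det_mul, Matrix.det_transpose, Matrix.det_diagonal,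
        Finset.prod_inv_distrib, h3, mul_inv]
      ring
    have h2 : 0 ≤ ∏ j, d j := Finset.prod_nonneg (fun j _ => (hdpos j).le)
    have h4 : 0 ≤ (B.det)^2 * ∏ j, d j := by positivity
    rw [h1, Real.inv_rpow h4, neg_div, Real.rpow_neg h4, inv_inv, ← Real.sqrt_eq_rpow,
      Real.sqrt_mul (sq_nonneg _), Real.sqrt_sq_eq_abs]
    congr 1
    exact Real.sqrt_prod _ (fun j _ => (hdpos j).le)
  have hpi : (2 * Real.pi) ^ (-(n : ℝ) / 2) = ∏ _j : Fin n, (Real.sqrt (2 * Real.pi))⁻¹ := by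
    have hp : 0 ≤ 2 * Real.pi := by positivity
    rw [Finset.prod_const, Finset.card_univ, Fintype.card_fin, Real.sqrt_eq_rpow,
      ← Real.rpow_neg hp, ← Real.rpow_natCast, ← Real.rpow_mul hp]
    congr 1
    ring
  have hgw : ∀ (l : ℕ) (z : Fin n → ℝ), gfun z * w z ^ l =
      ((2 * Real.pi) ^ (-(n : ℝ) / 2) * Γhat.det ^ (-(1 : ℝ) / 2)) *
      Real.exp (-(1/2) * ∑ j, (d j * ((B *ᵥ z) j - (B *ᵥ xhat) j)^2 +
        ((l:ℝ) * e j) * ((B *ᵥ z) j)^2)) := by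
    intro l z
    rw [hgfun, hw, hdiff, hGinv, hquad, hquad, ← Real.exp_nat_mul, mul_assoc, ← Real.exp_add]
    congr 2
    rw [Finset.sum_add_distrib, Matrix.mulVec_sub]
    simp only [Pi.sub_apply, mul_assoc]
    rw [← Finset.mul_sum]
    ring
  have hmom : ∀ l : ℕ, Integrable (fun z => gfun z * w z ^ l) ∧
      ∫ z, gfun z * w z ^ l = 1 / N l := by
    intro l
    obtain ⟨hi, hint⟩ := aux_multi n B hdetB d (fun j => (l:ℝ) * e j) (B *ᵥ xhat) hdpos
      (fun j => mul_nonneg (Nat.cast_nonneg l) (hepos j))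
    constructor
    · simp only [hgw]
      exact hi.const_mul _
    · simp only [hgw]
      rw [integral_const_mul, hint, hdetG, hpi, hN]
      have hab : |B.det| ≠ 0 := abs_ne_zero.2 hdetB
      rw [Finset.mul_sum, Real.exp_sum, ← Finset.prod_mul_distrib, one_div (∏ j ∈ _, _),
        ← Finset.prod_inv_distrib, Finset.prod_filter]
      calc _ = (∏ _j : Fin n, (Real.sqrt (2 * Real.pi))⁻¹) * (∏ j, Real.sqrt (d j)) *
            ∏ j, (Real.sqrt (2 * Real.pi / (d j + l * e j)) *
              Real.exp (-(1/2) * ((B *ᵥ xhat) j^2 * d j * (l * e j) / (d j + l * e j)))) := by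
            have key : ∀ p a q r : ℝ, a ≠ 0 → p * (a * q) * (a⁻¹ * r) = p * q * r := by
              intro p a q r ha
              field_simp
            exact key _ _ _ _ hab
        _ = _ := by
          rw [← Finset.prod_mul_distrib, ← Finset.prod_mul_distrib]
          refine Finset.prod_congr rfl (fun j _ => ?_)
          have hde : 0 < d j + l * e j :=
            add_pos_of_pos_of_nonneg (hdpos j) (mul_nonneg (Nat.cast_nonneg l) (hepos j))
          have h2p : Real.sqrt (2 * Real.pi) ≠ 0 := by positivity
          have hsd : Real.sqrt (d j) ≠ 0 := (Real.sqrt_pos.2 (hdpos j)).ne'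
          have hl := hlam_nonneg j
          rw [hmean, Real.sqrt_div (by positivity)]
          by_cases hj : (j : ℕ) < k
          · have he0 : e j = 0 := by simp only [he, if_pos hj]
            rw [if_neg (by omega), he0]
            simp
            field_simp
          · have he0 : e j = μ * lam j := by simp only [he, if_neg hj]
            have hd0 : d j = σ := by simp only [hd, if_neg hj, mul_zero, add_zero]
            rw [if_pos (by omega), he0, hd0]
            rw [he0, hd0] at hde
            rw [hd0] at hsd
            have h5 : 1 + (l:ℝ) * μ * lam j / σ = (σ + l * (μ * lam j)) / σ := by
              field_simp
            have hsde : Real.sqrt (σ + l * (μ * lam j)) ≠ 0 := (Real.sqrt_pos.2 hde).ne'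
            rw [h5, Real.sqrt_div hde.le, mul_inv, ← Real.exp_neg]
            have h6 : -(1/2) * ((μ * (σ⁻¹ * cc j))^2 * σ * (l * (μ * lam j)) / (σ + l * (μ * lam j)))
                = -(μ ^ 2 / (2 * σ) * ((l * μ * lam j) / (l * μ * lam j + σ) * cc j ^ 2)) := by
              have : (l:ℝ) * μ * lam j + σ = σ + l * (μ * lam j) := by ring
              rw [this]
              field_simp
            rw [h6]
            field_simp
            simp only [hcc]
  have hwm : Measurable w := by
    have : w = fun z => Real.exp (-(1/2) * ∑ j, e j * ((B *ᵥ z) j)^2) := by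
      funext z
      rw [hw, hdiff, hquad]
    rw [this]
    apply Continuous.measurable
    have : Continuous fun z : Fin n → ℝ => B *ᵥ z := by fun_prop
    fun_prop
  have hgpos : ∀ z, 0 ≤ gfun z := by
    intro z
    have := hgw 0 z
    rw [pow_zero, mul_one] at this
    rw [this, hdetG]
    positivity
  have hwx : 0 < w x := by rw [hw]; exact Real.exp_pos _
  simp only [hη]
  have m0 := hmom 0
  have m1 := hmom 1
  have m2 := hmom 2
  have hN0 : N 0 = 1 := by rw [hN]; simp
  simp only [pow_zero, mul_one, hN0, div_one] at m0
  simp only [pow_one] at m1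
  exact aux_cheb gfun w hgpos hwm (N 1) (N 2) (w x) ε hwx hε m0.1 m1.1 m2.1 m0.2 m1.2 m2.2
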